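/- For a conical intersection the nondegeneracy of the conicity matrix is necessary: let H(u) = H₀ + u₁H₁ + u₂H₂ + u₃H₃ be Hermitian n×n matrices, and suppose λ_j(ū) = λ_{j+1}(ū) is a double eigenvalue with orthonormal eigenvectors ψ₁, ψ₂ such that the conicity matrix M(ψ₁,ψ₂) is singular. Then the intersection is not conical: for every c > 0 there exist a unit vector v ∈ ℝ³ and arbitrarily small t > 0 with λ_{j+1}(ū + tv) − λ_j(ū + tv) ≤ ct. -/

import Mathlib

open Polynomial
open scoped InnerProductSpace ComplexConjugate

/-!
Since the `Hᵢ` are Hermitian, every row of the conicity matrix is fixed by the conjugate-linear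
involution `(x, y, z) ↦ (ȳ, x̄, z̄)`, so a complex linear relation between the rows yields a real
one, that is, a real unit direction `v`. For `B = ∑ vᵢ Hᵢ` the relation says that the compression
of `B` to the double eigenspace of `A = H(ū)` is a scalar `b`. Hence `N = B - b` couples the
eigenspace only to its orthogonal complement, where the spectrum of `A` is at distance at least
some `d > 0` from the double eigenvalue; by a min-max argument the two corresponding eigenvalues of
`A + tN` then stay within `2 t² ‖N‖² / d` of it. The splitting along `v` is thus `O(t²)`, below
`ct` for small `t`.
-/

lemma exists_pos_lt_mul_sq_le_mul (K : ℝ) {c ε : ℝ} (hc : 0 < c) (hε : 0 < ε) :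
    ∃ t, 0 < t ∧ t < ε ∧ K * t ^ 2 ≤ c * t := by
  have hK : 0 < |K| + 1 := by positivity
  have ht : 0 < min (ε / 2) (c / (|K| + 1)) := lt_min (half_pos hε) (div_pos hc hK)
  refine ⟨_, ht, (min_le_left _ _).trans_lt (half_lt_self hε), ?_⟩
  rw [sq, ← mul_assoc]
  refine mul_le_mul_of_nonneg_right ?_ ht.le
  calc K * min (ε / 2) (c / (|K| + 1)) ≤ (|K| + 1) * (c / (|K| + 1)) := by
        gcongr
        · exact (le_abs_self K).trans (lt_add_one _).le
        · exact min_le_right _ _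
    _ = c := mul_div_cancel₀ c hK.ne'

lemma exists_pos_forall_ne_le_abs_sub {κ : Type*} [Finite κ] (a : κ → ℝ) (L : ℝ) :
    ∃ d > 0, ∀ i, a i ≠ L → d ≤ |a i - L| := by
  have hfin : (Set.range a \ {L}).Finite := (Set.finite_range a).sdiff
  obtain ⟨d, hd, hball⟩ := Metric.mem_nhds_iff.mp
    (hfin.isClosed.isOpen_compl.mem_nhds (show L ∈ (Set.range a \ {L})ᶜ by simp))
  refine ⟨d, hd, fun i hi => ?_⟩
  by_contra! hlt
  exact hball (Metric.mem_ball.mpr hlt) ⟨⟨i, rfl⟩, hi⟩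

lemma exists_equiv_of_map_univ_eq {ι κ α : Type*} [Fintype ι] [Fintype κ] {f : ι → α} {g : κ → α}
    (h : Finset.univ.val.map f = Finset.univ.val.map g) :
    ∃ σ : ι ≃ κ, ∀ i, g (σ i) = f i := by
  classical
  have card_fiber_eq (c : α) : Fintype.card {i // f i = c} = Fintype.card {k // g k = c} := by
    have hcount := congrArg (Multiset.count c) h
    rw [Multiset.count_map, Multiset.count_map] at hcount
    simp only [Fintype.card_subtype, eq_comm (b := c)]
    exact hcount
  exact ⟨Equiv.ofFiberEquiv fun c => Fintype.equivOfCardEq (card_fiber_eq c),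
    Equiv.ofFiberEquiv_map _⟩

section Eigenbasis

variable {𝕜 E ι : Type*} [RCLike 𝕜] [NormedAddCommGroup E] [InnerProductSpace 𝕜 E] [Fintype ι]

theorem exists_orthonormalBasis_apply_eq_smul [FiniteDimensional 𝕜 E] {T : E →ₗ[𝕜] E}
    (hT : T.IsSymmetric) {μ : ι → ℝ} (hμ : T.charpoly = ∏ i, (X - C (μ i : 𝕜))) :
    ∃ f : OrthonormalBasis ι 𝕜 E, ∀ i, T (f i) = (μ i : 𝕜) • f i := by
  have hroots : Finset.univ.val.map (hT.eigenvalues rfl) = Finset.univ.val.map μ := by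
    have h := (hT.roots_charpoly_eq_eigenvalues rfl).symm.trans
      ((congrArg roots hμ).trans (roots_prod _ _ (Finset.prod_ne_zero_iff.mpr
        fun i _ => X_sub_C_ne_zero (μ i : 𝕜))))
    simpa [Multiset.map_map, Function.comp_def] using congrArg (Multiset.map RCLike.re) h
  obtain ⟨σ, hσ⟩ := exists_equiv_of_map_univ_eq hroots
  refine ⟨(hT.eigenvectorBasis rfl).reindex σ, fun i => ?_⟩
  rw [OrthonormalBasis.reindex_apply, hT.apply_eigenvectorBasis, ← hσ, σ.apply_symm_apply]

variable {T : E →ₗ[𝕜] E} {μ : ι → ℝ} {f : OrthonormalBasis ι 𝕜 E}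

lemma inner_apply_of_eigenbasis (hf : ∀ i, T (f i) = (μ i : 𝕜) • f i) (i : ι) (x : E) :
    ⟪f i, T x⟫_𝕜 = μ i * ⟪f i, x⟫_𝕜 := by
  classical
  conv_lhs => rw [← f.sum_repr' x]
  simp [hf, inner_sum, inner_smul_right, orthonormal_iff_ite.mp f.orthonormal, mul_comm]

lemma re_inner_apply_eq_sum (hf : ∀ i, T (f i) = (μ i : 𝕜) • f i) (x : E) :
    RCLike.re ⟪x, T x⟫_𝕜 = ∑ i, μ i * ‖⟪f i, x⟫_𝕜‖ ^ 2 := by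
  rw [← f.sum_inner_mul_inner, map_sum]
  refine Finset.sum_congr rfl fun i _ => ?_
  rw [inner_apply_of_eigenbasis hf, mul_left_comm, RCLike.re_ofReal_mul,
    inner_mul_symm_re_eq_norm, norm_mul, norm_inner_symm x, sq]

lemma mul_norm_sq_le_re_inner_apply (hf : ∀ i, T (f i) = (μ i : 𝕜) • f i) {m : ℝ} {x : E}
    (hx : ∀ i, ⟪f i, x⟫_𝕜 ≠ 0 → m ≤ μ i) : m * ‖x‖ ^ 2 ≤ RCLike.re ⟪x, T x⟫_𝕜 := by
  rw [re_inner_apply_eq_sum hf, ← f.sum_sq_norm_inner_right, Finset.mul_sum]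
  refine Finset.sum_le_sum fun i _ => ?_
  by_cases h : ⟪f i, x⟫_𝕜 = 0
  · simp [h]
  · exact mul_le_mul_of_nonneg_right (hx i h) (sq_nonneg _)

lemma inner_eq_zero_of_apply_eq_smul (hf : ∀ i, T (f i) = (μ i : 𝕜) • f i) {L : ℝ} {x : E}
    (hx : T x = (L : 𝕜) • x) {i : ι} (hi : μ i ≠ L) : ⟪f i, x⟫_𝕜 = 0 := by
  have h := inner_apply_of_eigenbasis hf i x
  rw [hx, inner_smul_right] at h
  exact (mul_eq_mul_right_iff.mp h).resolve_left fun hL => hi (RCLike.ofReal_injective hL).symm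

lemma finrank_eigenspace_le_card [FiniteDimensional 𝕜 E]
    (hf : ∀ i, T (f i) = (μ i : 𝕜) • f i) (L : ℝ) :
    Module.finrank 𝕜 (Module.End.eigenspace T (L : 𝕜)) ≤ Fintype.card {i // μ i = L} := by
  have hle : Module.End.eigenspace T (L : 𝕜) ≤
      Submodule.span 𝕜 (Set.range fun i : {i // μ i = L} => f i) := by
    intro x hx
    rw [← f.sum_repr' x]
    refine Submodule.sum_mem _ fun i _ => ?_
    by_cases hi : μ i = L
    · exact Submodule.smul_mem _ _ (Submodule.subset_span ⟨⟨i, hi⟩, rfl⟩)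
    · simp [inner_eq_zero_of_apply_eq_smul hf (Module.End.mem_eigenspace_iff.mp hx) hi]
  exact (Submodule.finrank_mono hle).trans (finrank_range_le_card _)

lemma eigenspace_le_span_of_linearIndependent {κ : Type*} [Fintype κ] [FiniteDimensional 𝕜 E]
    (hf : ∀ i, T (f i) = (μ i : 𝕜) • f i) {L : ℝ} {ψ : κ → E} (hψ : LinearIndependent 𝕜 ψ)
    (hTψ : ∀ k, T (ψ k) = (L : 𝕜) • ψ k) (hcard : Fintype.card {i // μ i = L} ≤ Fintype.card κ) :
    Module.End.eigenspace T (L : 𝕜) ≤ Submodule.span 𝕜 (Set.range ψ) := by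
  have hle : Submodule.span 𝕜 (Set.range ψ) ≤ Module.End.eigenspace T (L : 𝕜) :=
    Submodule.span_le.mpr (Set.range_subset_iff.mpr fun k =>
      Module.End.mem_eigenspace_iff.mpr (hTψ k))
  refine (Submodule.eq_of_le_of_finrank_le hle ?_).ge
  rw [finrank_span_eq_card hψ]
  exact (finrank_eigenspace_le_card hf L).trans hcard

lemma inner_apply_eq_zero_of_mem_span {N : E →ₗ[𝕜] E} {s : Set E}
    (hs : ∀ x ∈ s, ∀ y ∈ s, ⟪x, N y⟫_𝕜 = 0) {x y : E} (hx : x ∈ Submodule.span 𝕜 s)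
    (hy : y ∈ Submodule.span 𝕜 s) : ⟪x, N y⟫_𝕜 = 0 := by
  have hNy : N y ∈ (Submodule.span 𝕜 s)ᗮ := by
    refine (Submodule.span_le (p := (Submodule.span 𝕜 s)ᗮ.comap N)).mpr (fun y hy => ?_) hy
    exact (Submodule.mem_orthogonal _ _).mpr fun x hx => by
      induction hx using Submodule.span_induction with
      | mem x hx => exact hs x hx y hy
      | zero => simp
      | add x₁ x₂ _ _ h₁ h₂ => simp [inner_add_left, h₁, h₂]
      | smul c x _ h => simp [inner_smul_left, h]
  exact Submodule.inner_right_of_mem_orthogonal hx hNy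

end Eigenbasis

section Perturbation

variable {𝕜 E ι : Type*} [RCLike 𝕜] [NormedAddCommGroup E] [InnerProductSpace 𝕜 E] [Fintype ι]

lemma exists_ne_zero_forall_inner_eq_zero (v : ι → E)
    (hcard : Fintype.card ι < Module.finrank 𝕜 E) : ∃ x : E, x ≠ 0 ∧ ∀ i, ⟪v i, x⟫_𝕜 = 0 := by
  have : FiniteDimensional 𝕜 E := .of_finrank_pos (Nat.zero_lt_of_lt hcard)
  have hker : (LinearMap.pi fun i => innerₛₗ 𝕜 (v i)).ker ≠ ⊥ :=
    LinearMap.ker_ne_bot_of_finrank_lt (by rwa [Module.finrank_fintype_fun_eq_card])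
  obtain ⟨x, hx, hx0⟩ := Submodule.exists_mem_ne_zero_of_ne_bot hker
  exact ⟨x, hx0, congrFun (LinearMap.mem_ker.mp hx)⟩

lemma exists_ne_zero_inner_support_subset (e f : OrthonormalBasis ι 𝕜 E) {s t : Finset ι}
    (hst : Fintype.card ι < s.card + t.card) :
    ∃ x : E, x ≠ 0 ∧ (∀ i, ⟪e i, x⟫_𝕜 ≠ 0 → i ∈ s) ∧ (∀ i, ⟪f i, x⟫_𝕜 ≠ 0 → i ∈ t) := by
  classical
  have hcard : Fintype.card (↥sᶜ ⊕ ↥tᶜ) < Module.finrank 𝕜 E := by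
    rw [Module.finrank_eq_card_basis e.toBasis, Fintype.card_sum, Fintype.card_coe,
      Fintype.card_coe, Finset.card_compl, Finset.card_compl]
    have := s.card_le_univ
    have := t.card_le_univ
    omega
  obtain ⟨x, hx0, hx⟩ := exists_ne_zero_forall_inner_eq_zero
    (Sum.elim (fun i : ↥sᶜ => e i) (fun i : ↥tᶜ => f i)) hcard
  refine ⟨x, hx0, fun i hi => ?_, fun i hi => ?_⟩
  · by_contra his
    exact hi (hx (.inl ⟨i, Finset.mem_compl.mpr his⟩))
  · by_contra hit
    exact hi (hx (.inr ⟨i, Finset.mem_compl.mpr hit⟩))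

lemma exists_add_mem_eigenspace_re_inner_apply_le {A : E →ₗ[𝕜] E} {a : ι → ℝ}
    {e : OrthonormalBasis ι 𝕜 E} (he : ∀ i, A (e i) = (a i : 𝕜) • e i) {L d : ℝ}
    (hgap : ∀ i, a i ≠ L → d ≤ |a i - L|) {x : E} (hx : ∀ i, ⟪e i, x⟫_𝕜 ≠ 0 → a i ≤ L) :
    ∃ y z : E, y + z = x ∧ A y = (L : 𝕜) • y ∧ ‖x‖ ^ 2 = ‖y‖ ^ 2 + ‖z‖ ^ 2 ∧
      RCLike.re ⟪x, A x⟫_𝕜 ≤ L * ‖x‖ ^ 2 - d * ‖z‖ ^ 2 := by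
  have : FiniteDimensional 𝕜 E := e.toBasis.finiteDimensional_of_finite
  set V := Module.End.eigenspace A (L : 𝕜)
  have hAy : A (V.starProjection x) = (L : 𝕜) • V.starProjection x :=
    Module.End.mem_eigenspace_iff.mp (V.starProjection_apply_mem x)
  refine ⟨V.starProjection x, Vᗮ.starProjection x,
    V.starProjection_add_starProjection_orthogonal x, hAy,
    V.norm_sq_eq_add_norm_sq_starProjection x, ?_⟩
  rw [re_inner_apply_eq_sum he, ← e.sum_sq_norm_inner_right x,
    ← e.sum_sq_norm_inner_right (Vᗮ.starProjection x), Finset.mul_sum, Finset.mul_sum,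
    ← Finset.sum_sub_distrib]
  refine Finset.sum_le_sum fun i _ => ?_
  by_cases hi : a i = L
  · have hz : ⟪e i, Vᗮ.starProjection x⟫_𝕜 = 0 :=
      Submodule.inner_right_of_mem_orthogonal (Module.End.mem_eigenspace_iff.mpr (hi ▸ he i))
        (Vᗮ.starProjection_apply_mem x)
    rw [hz, hi, norm_zero, zero_pow two_ne_zero, mul_zero, sub_zero]
  · have hz : ⟪e i, Vᗮ.starProjection x⟫_𝕜 = ⟪e i, x⟫_𝕜 := by
      rw [V.starProjection_orthogonal_val, inner_sub_right,
        inner_eq_zero_of_apply_eq_smul he hAy hi, sub_zero]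
    rw [hz, ← sub_mul]
    by_cases hxi : ⟪e i, x⟫_𝕜 = 0
    · simp [hxi]
    · have hd := hgap i hi
      rw [abs_of_nonpos (sub_nonpos.mpr (hx i hxi))] at hd
      exact mul_le_mul_of_nonneg_right (by linarith) (sq_nonneg _)

lemma quadratic_form_le_two_mul_sq_div_mul {K d : ℝ} (hK : 0 ≤ K) (hd : 0 < d) (y z : ℝ) :
    2 * K * y * z + K * z ^ 2 - d * z ^ 2 ≤ 2 * K ^ 2 / d * (y ^ 2 + z ^ 2) := by
  obtain ⟨r, rfl⟩ : ∃ r, K = d * r := ⟨K / d, by field_simp⟩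
  have hr : 0 ≤ r := nonneg_of_mul_nonneg_right hK hd
  have hsos : 0 ≤ d * ((2 * r * y - z) ^ 2 / 2 + (2 * r - 1) ^ 2 / 2 * z ^ 2 + r * z ^ 2) := by
    positivity
  have hquot : 2 * (d * r) ^ 2 / d = 2 * d * r ^ 2 := by field_simp
  rw [hquot]
  linarith

lemma re_inner_add_apply_add_le (N : E →L[𝕜] E) {y : E} (hy : ⟪y, N y⟫_𝕜 = 0) (z : E) :
    RCLike.re ⟪y + z, N (y + z)⟫_𝕜 ≤ 2 * ‖N‖ * ‖y‖ * ‖z‖ + ‖N‖ * ‖z‖ ^ 2 := by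
  have hbound (u w : E) : RCLike.re ⟪u, N w⟫_𝕜 ≤ ‖N‖ * ‖u‖ * ‖w‖ :=
    calc RCLike.re ⟪u, N w⟫_𝕜 ≤ ‖u‖ * ‖N w‖ := re_inner_le_norm _ _
      _ ≤ ‖u‖ * (‖N‖ * ‖w‖) := by gcongr; exact N.le_opNorm w
      _ = ‖N‖ * ‖u‖ * ‖w‖ := by ring
  simp only [map_add, inner_add_left, inner_add_right, hy, zero_add]
  linarith [hbound y z, hbound z y, hbound z z]

variable {A N : E →L[𝕜] E} {a μ : ι → ℝ} {e f : OrthonormalBasis ι 𝕜 E}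

lemma sub_le_two_mul_opNorm_sq_div (he : ∀ i, A (e i) = (a i : 𝕜) • e i)
    (hf : ∀ i, (A + N) (f i) = (μ i : 𝕜) • f i) {L d m : ℝ} (hd : 0 < d)
    (hgap : ∀ i, a i ≠ L → d ≤ |a i - L|) (hN : ∀ y, A y = (L : 𝕜) • y → ⟪y, N y⟫_𝕜 = 0)
    {s t : Finset ι} (hst : Fintype.card ι < s.card + t.card) (hs : ∀ i ∈ s, a i ≤ L)
    (ht : ∀ i ∈ t, m ≤ μ i) : m - L ≤ 2 * ‖N‖ ^ 2 / d := by
  obtain ⟨x, hx0, hxs, hxt⟩ := exists_ne_zero_inner_support_subset e f hst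
  obtain ⟨y, z, hyz, hAy, hnorm, hAx⟩ := exists_add_mem_eigenspace_re_inner_apply_le
    (A := A.toLinearMap) he hgap fun i hi => hs i (hxs i hi)
  have hNx : RCLike.re ⟪x, N x⟫_𝕜 ≤ 2 * ‖N‖ * ‖y‖ * ‖z‖ + ‖N‖ * ‖z‖ ^ 2 :=
    hyz ▸ re_inner_add_apply_add_le N (hN y hAy) z
  have hTx : m * ‖x‖ ^ 2 ≤ RCLike.re ⟪x, A x⟫_𝕜 + RCLike.re ⟪x, N x⟫_𝕜 := by
    rw [← map_add, ← inner_add_right]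
    exact mul_norm_sq_le_re_inner_apply (T := (A + N).toLinearMap) hf fun i hi => ht i (hxt i hi)
  refine le_of_mul_le_mul_right ?_ (pow_pos (norm_pos_iff.mpr hx0) 2)
  calc (m - L) * ‖x‖ ^ 2
      ≤ 2 * ‖N‖ * ‖y‖ * ‖z‖ + ‖N‖ * ‖z‖ ^ 2 - d * ‖z‖ ^ 2 := by
        simp only [ContinuousLinearMap.coe_coe] at hAx
        linarith
    _ ≤ 2 * ‖N‖ ^ 2 / d * ‖x‖ ^ 2 :=
        hnorm ▸ quadratic_form_le_two_mul_sq_div_mul (norm_nonneg N) hd ‖y‖ ‖z‖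

variable [LinearOrder ι]

lemma card_lt_card_le_add_card_ge (k : ι) :
    Fintype.card ι < (Finset.univ.filter (· ≤ k)).card + (Finset.univ.filter (k ≤ ·)).card := by
  rw [← Finset.card_union_add_card_inter]
  have hunion : Finset.univ.filter (· ≤ k) ∪ Finset.univ.filter (k ≤ ·) = Finset.univ := by
    ext i
    simp [le_total]
  have hinter : (Finset.univ.filter (· ≤ k) ∩ Finset.univ.filter (k ≤ ·)).Nonempty := ⟨k, by simp⟩
  rw [hunion, Finset.card_univ]
  exact Nat.lt_add_of_pos_right hinter.card_pos

theorem abs_eigenvalue_sub_le (ha : Monotone a) (hμ : Monotone μ)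
    (he : ∀ i, A (e i) = (a i : 𝕜) • e i) (hf : ∀ i, (A + N) (f i) = (μ i : 𝕜) • f i) {k : ι}
    {d : ℝ} (hd : 0 < d) (hgap : ∀ i, a i ≠ a k → d ≤ |a i - a k|)
    (hN : ∀ y, A y = (a k : 𝕜) • y → ⟪y, N y⟫_𝕜 = 0) : |μ k - a k| ≤ 2 * ‖N‖ ^ 2 / d := by
  have hcard := card_lt_card_le_add_card_ge k
  refine abs_le'.mpr ⟨?_, ?_⟩
  · refine sub_le_two_mul_opNorm_sq_div he hf hd hgap hN hcard ?_ ?_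
    · simpa using fun i hi => ha hi
    · simpa using fun i hi => hμ hi
  · have hf' (i : ι) : (-A + -N) (f i) = ((-μ i : ℝ) : 𝕜) • f i := by
      rw [← neg_add, neg_apply, hf, RCLike.ofReal_neg, neg_smul]
    have hgap' (i : ι) (hi : -a i ≠ -a k) : d ≤ |-a i - -a k| := by
      rw [neg_sub_neg, abs_sub_comm]
      exact hgap i (mt (congrArg Neg.neg) hi)
    rw [neg_sub, ← neg_sub_neg, ← norm_neg N]
    rw [add_comm] at hcard
    refine sub_le_two_mul_opNorm_sq_div (A := -A) (e := e) (a := fun i => -a i) (fun i => ?_) hf'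
      hd hgap' (fun y hy => ?_) hcard ?_ ?_
    · simp [he]
    · simpa using hN y (by simpa using hy)
    · simpa using fun i hi => ha hi
    · simpa using fun i hi => hμ hi

theorem eigenvalue_sub_le_of_compression_eq_smul {B : E →L[𝕜] E} {b t : ℝ} (ha : Monotone a)
    (hμ : Monotone μ) (he : ∀ i, A (e i) = (a i : 𝕜) • e i)
    (hf : ∀ i, (A + (t : 𝕜) • B) (f i) = (μ i : 𝕜) • f i) {p q : ι} (hpq : a p = a q) {d : ℝ}
    (hd : 0 < d) (hgap : ∀ i, a i ≠ a p → d ≤ |a i - a p|)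
    (hB : ∀ y, A y = (a p : 𝕜) • y → ⟪y, (B - (b : 𝕜) • .id 𝕜 E) y⟫_𝕜 = 0) :
    μ q - μ p ≤ 4 * ‖B - (b : 𝕜) • .id 𝕜 E‖ ^ 2 / d * t ^ 2 := by
  set N := B - (b : 𝕜) • ContinuousLinearMap.id 𝕜 E with hN
  have hμb : Monotone fun i => μ i - t * b := fun i j hij => sub_le_sub_right (hμ hij) _
  have hfN (i : ι) : (A + (t : 𝕜) • N) (f i) = ((μ i - t * b : ℝ) : 𝕜) • f i := by
    rw [hN, smul_sub, ← add_sub_assoc, sub_apply, hf]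
    simp [sub_smul, mul_smul]
  have htN (y : E) (hy : A y = (a p : 𝕜) • y) : ⟪y, ((t : 𝕜) • N) y⟫_𝕜 = 0 := by
    rw [smul_apply, inner_smul_right, hB y hy, mul_zero]
  have hp := abs_le.mp (abs_eigenvalue_sub_le ha hμb he hfN hd hgap htN)
  have hq := abs_le.mp (abs_eigenvalue_sub_le (k := q) ha hμb he hfN hd (hpq ▸ hgap) (hpq ▸ htN))
  have hnorm : ‖(t : 𝕜) • N‖ ^ 2 = ‖N‖ ^ 2 * t ^ 2 := by
    rw [norm_smul, RCLike.norm_ofReal, mul_pow, sq_abs, mul_comm]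
  rw [hnorm] at hp hq
  calc μ q - μ p ≤ 2 * (‖N‖ ^ 2 * t ^ 2) / d + 2 * (‖N‖ ^ 2 * t ^ 2) / d := by linarith [hp.1, hq.2]
    _ = 4 * ‖N‖ ^ 2 / d * t ^ 2 := by ring

end Perturbation

section Conicity

variable {ι E : Type*}

theorem linearIndependent_complex_of_real {V : Type*} [AddCommGroup V] [Module ℂ V]
    (J : V →ₛₗ[starRingEnd ℂ] V) {r : ι → V} (hJ : ∀ i, J (r i) = r i)
    (hr : LinearIndependent ℝ r) : LinearIndependent ℂ r := by
  rw [linearIndependent_iff'] at hr ⊢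
  intro s c hc
  have hre (c : ι → ℂ) (hc : ∑ i ∈ s, c i • r i = 0) : ∑ i ∈ s, (c i).re • r i = 0 := by
    have hconj : ∑ i ∈ s, conj (c i) • r i = 0 := by simpa [hJ] using congrArg J hc
    calc ∑ i ∈ s, (c i).re • r i
        = (2 : ℂ)⁻¹ • (∑ i ∈ s, c i • r i + ∑ i ∈ s, conj (c i) • r i) := by
          simp only [← Finset.sum_add_distrib, Finset.smul_sum, ← add_smul, smul_smul,
            ← Complex.coe_smul, Complex.re_eq_add_conj, div_eq_inv_mul]
      _ = 0 := by rw [hc, hconj, add_zero, smul_zero]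
  have him : ∑ i ∈ s, (c i).im • r i = 0 := by
    simpa using hre (fun i => -Complex.I * c i) (by simp [mul_smul, ← Finset.smul_sum, hc])
  exact fun i hi => Complex.ext (hr s _ (hre c hc) i hi) (hr s _ him i hi)

variable [NormedAddCommGroup E] [InnerProductSpace ℂ E]

/-- The conicity matrix `M(ψ₁, ψ₂)` of the directions `Hᵢ`, with one row for each parameter. As the
number of parameters is arbitrary, singularity is expressed as linear dependence of the rows. -/
noncomputable def conicityMatrix (Hc : ι → E →L[ℂ] E) (ψ₁ ψ₂ : E) : Matrix ι (Fin 3) ℂ :=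
  Matrix.of fun i =>
    ![⟪ψ₁, Hc i ψ₂⟫_ℂ, conj ⟪ψ₁, Hc i ψ₂⟫_ℂ, ⟪ψ₂, Hc i ψ₂⟫_ℂ - ⟪ψ₁, Hc i ψ₁⟫_ℂ]

lemma not_linearIndependent_real_conicityMatrix_row {Hc : ι → E →L[ℂ] E}
    (hHc : ∀ i, (Hc i : E →ₗ[ℂ] E).IsSymmetric) {ψ₁ ψ₂ : E}
    (hsing : ¬LinearIndependent ℂ (conicityMatrix Hc ψ₁ ψ₂).row) :
    ¬LinearIndependent ℝ (conicityMatrix Hc ψ₁ ψ₂).row := by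
  let J : (Fin 3 → ℂ) →ₛₗ[starRingEnd ℂ] (Fin 3 → ℂ) :=
    { toFun x := ![conj (x 1), conj (x 0), conj (x 2)]
      map_add' x y := by ext i; fin_cases i <;> simp
      map_smul' c x := by ext i; fin_cases i <;> simp }
  have hreal (i : ι) (ψ : E) : conj ⟪ψ, Hc i ψ⟫_ℂ = ⟪ψ, Hc i ψ⟫_ℂ := by
    rw [inner_conj_symm]
    exact hHc i ψ ψ
  refine mt (linearIndependent_complex_of_real J fun i => ?_) hsing
  ext k
  fin_cases k
  · exact Complex.conj_conj _
  · rfl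
  · simp [J, conicityMatrix, hreal]

variable [Fintype ι]

lemma exists_norm_eq_one_sum_smul_eq_zero {V : Type*} [AddCommGroup V] [Module ℝ V] {r : ι → V}
    (hr : ¬LinearIndependent ℝ r) :
    ∃ v : EuclideanSpace ℝ ι, ‖v‖ = 1 ∧ ∑ i, v i • r i = 0 := by
  obtain ⟨c, hc, i, hi⟩ := Fintype.not_linearIndependent_iff.mp hr
  have hc0 : WithLp.toLp 2 c ≠ 0 := fun h => hi (congrFun (congrArg WithLp.ofLp h) i)
  refine ⟨‖WithLp.toLp 2 c‖⁻¹ • WithLp.toLp 2 c, norm_smul_inv_norm hc0, ?_⟩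
  simp [mul_smul, ← Finset.smul_sum, hc]

/-- The linear part `∑ uᵢ Hᵢ` of the affine family `H(u) = H₀ + ∑ uᵢ Hᵢ`. The parameters are real,
so that Hermitian `Hᵢ` give Hermitian operators; they act through the coercion to `ℂ`. -/
noncomputable def linearPart (Hc : ι → E →L[ℂ] E) (u : EuclideanSpace ℝ ι) : E →L[ℂ] E :=
  ∑ i, (u i : ℂ) • Hc i

lemma linearPart_add_smul (Hc : ι → E →L[ℂ] E) (u v : EuclideanSpace ℝ ι) (t : ℝ) :
    linearPart Hc (u + t • v) = linearPart Hc u + (t : ℂ) • linearPart Hc v := by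
  simp [linearPart, add_smul, mul_smul, Finset.sum_add_distrib, Finset.smul_sum]

lemma inner_linearPart_apply (Hc : ι → E →L[ℂ] E) (v : EuclideanSpace ℝ ι) (x y : E) :
    ⟪x, linearPart Hc v y⟫_ℂ = ∑ i, v i • ⟪x, Hc i y⟫_ℂ := by
  simp [linearPart]

lemma isSymmetric_linearPart {Hc : ι → E →L[ℂ] E} (hHc : ∀ i, (Hc i : E →ₗ[ℂ] E).IsSymmetric)
    (u : EuclideanSpace ℝ ι) : (linearPart Hc u : E →ₗ[ℂ] E).IsSymmetric := by
  rw [linearPart, ContinuousLinearMap.toLinearMap_sum]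
  exact LinearMap.isSymmetric_sum _ fun i _ => (hHc i).smul (Complex.conj_ofReal (u i))

theorem exists_norm_eq_one_inner_linearPart_eq {Hc : ι → E →L[ℂ] E}
    (hHc : ∀ i, (Hc i : E →ₗ[ℂ] E).IsSymmetric) {ψ₁ ψ₂ : E}
    (hsing : ¬LinearIndependent ℂ (conicityMatrix Hc ψ₁ ψ₂).row) :
    ∃ v : EuclideanSpace ℝ ι, ‖v‖ = 1 ∧ ⟪ψ₁, linearPart Hc v ψ₂⟫_ℂ = 0 ∧
      ⟪ψ₂, linearPart Hc v ψ₂⟫_ℂ = ⟪ψ₁, linearPart Hc v ψ₁⟫_ℂ := by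
  obtain ⟨v, hv, hrel⟩ := exists_norm_eq_one_sum_smul_eq_zero
    (not_linearIndependent_real_conicityMatrix_row hHc hsing)
  have hoffdiag := congrFun hrel 0
  have hdiag := congrFun hrel 2
  refine ⟨v, hv, ?_, ?_⟩
  · simpa [inner_linearPart_apply, conicityMatrix] using hoffdiag
  · rw [← sub_eq_zero]
    simpa [inner_linearPart_apply, conicityMatrix, mul_sub] using hdiag

lemma inner_sub_smul_id_apply_eq_zero {B : E →L[ℂ] E} (hB : (B : E →ₗ[ℂ] E).IsSymmetric)
    {ψ₁ ψ₂ : E} (hψ : Orthonormal ℂ ![ψ₁, ψ₂]) (h₁₂ : ⟪ψ₁, B ψ₂⟫_ℂ = 0)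
    (hdiag : ⟪ψ₂, B ψ₂⟫_ℂ = ⟪ψ₁, B ψ₁⟫_ℂ) {y : E}
    (hy : y ∈ Submodule.span ℂ (Set.range ![ψ₁, ψ₂])) :
    ⟪y, (B - ((⟪ψ₁, B ψ₁⟫_ℂ).re : ℂ) • .id ℂ E) y⟫_ℂ = 0 := by
  have hBsymm (x y : E) : ⟪B x, y⟫_ℂ = ⟪x, B y⟫_ℂ := hB x y
  have hb : ((⟪ψ₁, B ψ₁⟫_ℂ).re : ℂ) = ⟪ψ₁, B ψ₁⟫_ℂ := hB.coe_re_inner_self_apply ψ₁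
  have hB₂₁ : ⟪ψ₂, B ψ₁⟫_ℂ = 0 := by rw [← hBsymm, inner_eq_zero_symm, h₁₂]
  have h₁ : ‖ψ₁‖ = 1 := hψ.1 0
  have h₂ : ‖ψ₂‖ = 1 := hψ.1 1
  have hψ₁₂ : ⟪ψ₁, ψ₂⟫_ℂ = 0 := hψ.2 zero_ne_one
  have hψ₂₁ : ⟪ψ₂, ψ₁⟫_ℂ = 0 := hψ.2 one_ne_zero
  refine inner_apply_eq_zero_of_mem_span (N := (B - _ : E →L[ℂ] E).toLinearMap) ?_ hy hy
  simp [inner_sub_right, inner_smul_right, -Complex.coe_smul, *]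

theorem singular_conicity_matrix_not_conical_general {κ : Type*} [Fintype κ] [LinearOrder κ]
    [FiniteDimensional ℂ E] {H₀ : E →L[ℂ] E} {Hc : ι → E →L[ℂ] E}
    (hH₀ : (H₀ : E →ₗ[ℂ] E).IsSymmetric) (hHc : ∀ i, (Hc i : E →ₗ[ℂ] E).IsSymmetric)
    {lam : EuclideanSpace ℝ ι → κ → ℝ} (hmono : ∀ u, Monotone (lam u))
    (hchar : ∀ u, LinearMap.charpoly (H₀ + linearPart Hc u : E →L[ℂ] E).toLinearMap =
      ∏ k, (X - C (lam u k : ℂ)))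
    {ubar : EuclideanSpace ℝ ι} {p q : κ} (hdouble : lam ubar p = lam ubar q)
    (hsep : ∀ k, lam ubar k = lam ubar p → k = p ∨ k = q)
    {ψ₁ ψ₂ : E} (hψ : Orthonormal ℂ ![ψ₁, ψ₂])
    (heig₁ : (H₀ + linearPart Hc ubar) ψ₁ = (lam ubar p : ℂ) • ψ₁)
    (heig₂ : (H₀ + linearPart Hc ubar) ψ₂ = (lam ubar p : ℂ) • ψ₂)
    (hsing : ¬LinearIndependent ℂ (conicityMatrix Hc ψ₁ ψ₂).row) :
    ∃ v : EuclideanSpace ℝ ι, ‖v‖ = 1 ∧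
      ∃ K : ℝ, ∀ t : ℝ, lam (ubar + t • v) q - lam (ubar + t • v) p ≤ K * t ^ 2 := by
  obtain ⟨v, hv, h₁₂, hdiag⟩ := exists_norm_eq_one_inner_linearPart_eq hHc hsing
  have hsym (u) : (H₀ + linearPart Hc u : E →L[ℂ] E).toLinearMap.IsSymmetric :=
    hH₀.add (isSymmetric_linearPart hHc u)
  obtain ⟨e, he⟩ := exists_orthonormalBasis_apply_eq_smul (hsym ubar) (hchar ubar)
  obtain ⟨d, hd, hgap⟩ := exists_pos_forall_ne_le_abs_sub (lam ubar) (lam ubar p)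
  have hcard : Fintype.card {k // lam ubar k = lam ubar p} ≤ Fintype.card (Fin 2) := by
    rw [Fintype.card_subtype, Fintype.card_fin]
    refine (Finset.card_le_card fun k hk => ?_).trans (Finset.card_le_two (a := p) (b := q))
    simpa using hsep k (by simpa using hk)
  have hspan := eigenspace_le_span_of_linearIndependent he hψ.linearIndependent
    (Fin.forall_fin_two.mpr ⟨heig₁, heig₂⟩) hcard
  set A := H₀ + linearPart Hc ubar
  set B := linearPart Hc v
  set b := (⟪ψ₁, B ψ₁⟫_ℂ).re
  have hcompr (y : E) (hy : A y = (lam ubar p : ℂ) • y) :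
      ⟪y, (B - (b : ℂ) • .id ℂ E) y⟫_ℂ = 0 :=
    inner_sub_smul_id_apply_eq_zero (isSymmetric_linearPart hHc v) hψ h₁₂ hdiag
      (hspan (Module.End.mem_eigenspace_iff.mpr hy))
  refine ⟨v, hv, 4 * ‖B - (b : ℂ) • .id ℂ E‖ ^ 2 / d, fun t => ?_⟩
  obtain ⟨f, hf⟩ := exists_orthonormalBasis_apply_eq_smul (hsym (ubar + t • v))
    (hchar (ubar + t • v))
  rw [linearPart_add_smul, ← add_assoc] at hf
  exact eigenvalue_sub_le_of_compression_eq_smul (hmono ubar) (hmono (ubar + t • v)) he hf hdouble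
    hd hgap hcompr

end Conicity

/-- necessity of the nondegeneracy of the conicity matrix for a conical
intersection: if `λ_j(ū) = λ_{j+1}(ū)` is a double eigenvalue of
`H(u) = H₀ + u₁H₁ + u₂H₂ + u₃H₃`, isolated from the rest of the spectrum, with orthonormal
eigenvectors `ψ₁, ψ₂` whose conicity matrix is singular, then the intersection is not
conical: for every `c > 0` there are a unit direction `v` and arbitrarily small `t > 0`
with `λ_{j+1}(ū + tv) - λ_j(ū + tv) ≤ ct`. -/
theorem singular_conicity_matrix_not_conical
    {n j : ℕ} (hj : j + 1 < n)
    (H₀ : EuclideanSpace ℂ (Fin n) →L[ℂ] EuclideanSpace ℂ (Fin n))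
    (Hc : Fin 3 → (EuclideanSpace ℂ (Fin n) →L[ℂ] EuclideanSpace ℂ (Fin n)))
    (hH₀ : IsSelfAdjoint H₀) (hHc : ∀ i, IsSelfAdjoint (Hc i))
    (lam : EuclideanSpace ℝ (Fin 3) → Fin n → ℝ)
    (hmono : ∀ u, Monotone (lam u))
    (hchar : ∀ u, LinearMap.charpoly
      ((H₀ + ∑ i, (u i : ℂ) • Hc i : EuclideanSpace ℂ (Fin n) →L[ℂ] EuclideanSpace ℂ (Fin n)) :
        EuclideanSpace ℂ (Fin n) →ₗ[ℂ] EuclideanSpace ℂ (Fin n))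
      = ∏ k : Fin n, (X - C (lam u k : ℂ)))
    (ubar : EuclideanSpace ℝ (Fin 3))
    (hdouble : lam ubar ⟨j, by omega⟩ = lam ubar ⟨j + 1, hj⟩)
    (hsep_below : ∀ k : Fin n, k < (⟨j, by omega⟩ : Fin n) → lam ubar k < lam ubar ⟨j, by omega⟩)
    (hsep_above : ∀ k : Fin n, (⟨j + 1, hj⟩ : Fin n) < k → lam ubar ⟨j + 1, hj⟩ < lam ubar k)
    (ψ₁ ψ₂ : EuclideanSpace ℂ (Fin n))
    (h₁ : ⟪ψ₁, ψ₁⟫_ℂ = 1) (h₂ : ⟪ψ₂, ψ₂⟫_ℂ = 1) (h₁₂ : ⟪ψ₁, ψ₂⟫_ℂ = 0)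
    (heig₁ : (H₀ + ∑ i, (ubar i : ℂ) • Hc i) ψ₁ = (lam ubar ⟨j, by omega⟩ : ℂ) • ψ₁)
    (heig₂ : (H₀ + ∑ i, (ubar i : ℂ) • Hc i) ψ₂ = (lam ubar ⟨j, by omega⟩ : ℂ) • ψ₂)
    (M : Matrix (Fin 3) (Fin 3) ℂ)
    (hM : M = Matrix.of fun i =>
      ![⟪ψ₁, Hc i ψ₂⟫_ℂ, conj ⟪ψ₁, Hc i ψ₂⟫_ℂ, ⟪ψ₂, Hc i ψ₂⟫_ℂ - ⟪ψ₁, Hc i ψ₁⟫_ℂ])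
    (hsing : M.det = 0) :
    ∀ c > (0 : ℝ), ∀ ε > (0 : ℝ), ∃ v : EuclideanSpace ℝ (Fin 3), ‖v‖ = 1 ∧
      ∃ t : ℝ, 0 < t ∧ t < ε ∧
        lam (ubar + t • v) ⟨j + 1, hj⟩ - lam (ubar + t • v) ⟨j, by omega⟩ ≤ c * t := by
  have hψ : Orthonormal ℂ ![ψ₁, ψ₂] := by
    rw [orthonormal_iff_ite]
    simp [Fin.forall_fin_two, h₁, h₂, h₁₂, inner_eq_zero_symm.mp h₁₂, -inner_self_eq_norm_sq_to_K]
  have hsep (k : Fin n) (hk : lam ubar k = lam ubar ⟨j, by omega⟩) :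
      k = ⟨j, by omega⟩ ∨ k = ⟨j + 1, hj⟩ := by
    have hge := not_lt.mp fun hlt => (hsep_below k hlt).ne hk
    have hle := not_lt.mp fun hlt => (hsep_above k hlt).ne (hdouble.symm.trans hk.symm)
    simp only [Fin.le_def, Fin.ext_iff] at hge hle ⊢
    omega
  have hrows : ¬LinearIndependent ℂ (conicityMatrix Hc ψ₁ ψ₂).row := by
    rw [Matrix.linearIndependent_rows_iff_isUnit, Matrix.isUnit_iff_isUnit_det, isUnit_iff_ne_zero,
      not_not]
    rwa [hM] at hsing
  obtain ⟨v, hv, K, hgap⟩ := singular_conicity_matrix_not_conical_general hH₀.isSymmetric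
    (fun i => (hHc i).isSymmetric) hmono hchar hdouble hsep hψ heig₁ heig₂ hrows
  intro c hc ε hε
  obtain ⟨t, ht, htε, htc⟩ := exists_pos_lt_mul_sq_le_mul K hc hε
  exact ⟨v, hv, t, ht, htε, (hgap t).trans htc⟩
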